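/- arXiv:0805.2682 — 2 statements merged into one kernel-verified Lean document; each statement's English description precedes it below -/
import Mathlib

section
/- Let δ > 1 and x ∈ X. If limsup_{n→∞} [κ_n(x)]^{1/n} ≥ δ, then there exists an integer m ≥ 0 such that κ_-(f^[m](x)) ≥ δ, i.e. x is sent by some iterate of f to a point of the invariant set {κ_- ≥ δ}. -/
open Filter

/-!
Fix an ultrafilter `U` along which `[κ_n(x)]^{1/n}` stays above every `c < δ`, and measure sets of
times by their density along `U`, a shift-invariant finitely additive probability on `ℕ`. By
noetherianity there is a closed set `C` which is minimal among those visited by the orbit of `x`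
with positive density. Poincaré recurrence for the density gives `t ≥ 1` such that the orbit is in
`C ∩ f^{-t}(C)` with positive density, and minimality forces `f^t(C) = C`.

Let `N > 0` be a multiple of `t` and suppose `κ_N(y) < d ^ N` for some `y ∈ C` and `d < δ`. By
minimality the times of visit to `C ∩ {κ_N ≥ d ^ N}` have density zero. Once in `C`, the orbit
returns to `C` every `N` steps, so cutting it into blocks of length `N` bounds the growth rate of
`κ_n(x)` along `U` by `d`, a contradiction. Hence `κ_N ≥ δ ^ N` on `C`, and since `f^N(C) = C`,
every point of `C` has a preimage under `f^N` at which `κ_N ≥ δ ^ N`.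
-/

open Set Topology

open Classical in
/-- The number of elements of `A` among `0, …, n - 1`: `Nat.count` with classical decidability. -/
noncomputable def countBelow (A : Set ℕ) (n : ℕ) : ℕ :=
  Nat.count (· ∈ A) n

section CountBelow

variable {A B : Set ℕ}

theorem countBelow_le (A : Set ℕ) (n : ℕ) : countBelow A n ≤ n := by
  classical exact Nat.count_le _

theorem countBelow_empty (n : ℕ) : countBelow ∅ n = 0 := by
  simp [countBelow]

theorem countBelow_univ (n : ℕ) : countBelow univ n = n := by
  simp [countBelow]

theorem countBelow_monotone (A : Set ℕ) : Monotone (countBelow A) := by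
  classical exact Nat.count_monotone _

theorem countBelow_mono_left (hAB : A ⊆ B) (n : ℕ) : countBelow A n ≤ countBelow B n := by
  classical exact Nat.count_mono_left fun k _ hk ↦ hAB hk

theorem countBelow_add (A : Set ℕ) (m n : ℕ) :
    countBelow A (m + n) = countBelow A m + countBelow ((m + ·) ⁻¹' A) n := by
  classical exact Nat.count_add _ m n

theorem countBelow_succ (A : Set ℕ) (n : ℕ) :
    countBelow A (n + 1) = countBelow A n + A.indicator 1 n := by
  classical exact Nat.count_succ _ n

theorem countBelow_union_add_inter (A B : Set ℕ) (n : ℕ) :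
    countBelow (A ∪ B) n + countBelow (A ∩ B) n = countBelow A n + countBelow B n := by
  classical
  simp only [countBelow, Nat.count_eq_card_filter_range, mem_union, mem_inter_iff,
    Finset.filter_or, Finset.filter_and, Finset.card_union_add_card_inter]

end CountBelow

/-- The density of a set `A` of times along the ultrafilter `U`: the limit along `U` of the
proportion of elements of `A` among `0, …, n - 1`. It always exists, see `tendsto_ultradensity`. -/
noncomputable def ultradensity (U : Ultrafilter ℕ) (A : Set ℕ) : ℝ :=
  limUnder (U : Filter ℕ) fun n : ℕ ↦ (countBelow A n : ℝ) / n

section Ultradensity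

variable {U : Ultrafilter ℕ} {A B : Set ℕ}

theorem countBelow_div_le_one (A : Set ℕ) (n : ℕ) : (countBelow A n : ℝ) / n ≤ 1 :=
  div_le_one_of_le₀ (mod_cast countBelow_le A n) n.cast_nonneg

theorem tendsto_ultradensity (U : Ultrafilter ℕ) (A : Set ℕ) :
    Tendsto (fun n : ℕ ↦ (countBelow A n : ℝ) / n) U (𝓝 (ultradensity U A)) := by
  have proportion_mem (n : ℕ) : (countBelow A n : ℝ) / n ∈ Icc (0 : ℝ) 1 :=
    ⟨by positivity, countBelow_div_le_one A n⟩
  obtain ⟨l, -, hl⟩ := isCompact_Icc.ultrafilter_le_nhds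
    (U.map fun n : ℕ ↦ (countBelow A n : ℝ) / n)
    (le_principal_iff.2 (Eventually.of_forall (f := (U : Filter ℕ)) proportion_mem))
  exact tendsto_nhds_limUnder ⟨l, hl⟩

theorem ultradensity_nonneg : 0 ≤ ultradensity U A :=
  ge_of_tendsto' (tendsto_ultradensity U A) fun n ↦ by positivity

theorem ultradensity_le_one : ultradensity U A ≤ 1 :=
  le_of_tendsto' (tendsto_ultradensity U A) (countBelow_div_le_one A)

theorem ultradensity_empty : ultradensity U ∅ = 0 :=
  tendsto_nhds_unique (tendsto_ultradensity U ∅)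
    (tendsto_const_nhds.congr fun n ↦ by simp [countBelow_empty])

theorem ultradensity_univ (hU : (U : Filter ℕ) ≤ atTop) : ultradensity U univ = 1 := by
  refine tendsto_nhds_unique (tendsto_ultradensity U univ) (tendsto_const_nhds.congr' ?_)
  filter_upwards [hU (eventually_ne_atTop 0)] with n hn
  simp [countBelow_univ, hn]

theorem ultradensity_mono (hAB : A ⊆ B) : ultradensity U A ≤ ultradensity U B :=
  le_of_tendsto_of_tendsto' (tendsto_ultradensity U A) (tendsto_ultradensity U B) fun n ↦ by
    gcongr
    exact countBelow_mono_left hAB n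

theorem ultradensity_union_add_inter (U : Ultrafilter ℕ) (A B : Set ℕ) :
    ultradensity U (A ∪ B) + ultradensity U (A ∩ B) = ultradensity U A + ultradensity U B := by
  refine tendsto_nhds_unique ((tendsto_ultradensity U _).add (tendsto_ultradensity U _))
    (((tendsto_ultradensity U A).add (tendsto_ultradensity U B)).congr fun n ↦ ?_)
  rw [← add_div, ← add_div]
  exact_mod_cast congrArg (fun c : ℕ ↦ (c : ℝ) / n) (countBelow_union_add_inter A B n).symm

theorem ultradensity_preimage_add (hU : (U : Filter ℕ) ≤ atTop) (A : Set ℕ) (t : ℕ) :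
    ultradensity U ((t + ·) ⁻¹' A) = ultradensity U A := by
  have tendsto_shift_error : Tendsto (fun n : ℕ ↦
      ((countBelow ((t + ·) ⁻¹' A) n : ℝ) - countBelow A n) / n) U (𝓝 0) := by
    refine squeeze_zero_norm (fun n ↦ ?_)
      ((tendsto_const_div_atTop_nhds_zero_nat (t : ℝ)).mono_left hU)
    rw [norm_div, Real.norm_natCast, Real.norm_eq_abs]
    gcongr
    have split_first : (countBelow A (t + n) : ℝ) =
        countBelow A t + countBelow ((t + ·) ⁻¹' A) n := mod_cast countBelow_add A t n
    have split_last : (countBelow A (t + n) : ℝ) =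
        countBelow A n + countBelow ((n + ·) ⁻¹' A) t := by
      rw [add_comm t n]
      exact mod_cast countBelow_add A n t
    have first_le : (countBelow A t : ℝ) ≤ t := mod_cast countBelow_le _ t
    have last_le : (countBelow ((n + ·) ⁻¹' A) t : ℝ) ≤ t := mod_cast countBelow_le _ t
    rw [abs_le]
    constructor <;> linarith [(countBelow A t).cast_nonneg (α := ℝ),
      (countBelow ((n + ·) ⁻¹' A) t).cast_nonneg (α := ℝ)]
  have tendsto_shift := (tendsto_ultradensity U A).add tendsto_shift_error
  rw [add_zero] at tendsto_shift
  refine tendsto_nhds_unique (tendsto_ultradensity U _) (tendsto_shift.congr fun n ↦ ?_)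
  rw [← add_div, add_sub_cancel]

theorem ultradensity_biUnion_eq_zero {ι : Type*} {S : Finset ι} {A : ι → Set ℕ}
    (hA : ∀ i ∈ S, ultradensity U (A i) = 0) : ultradensity U (⋃ i ∈ S, A i) = 0 := by
  classical
  induction S using Finset.induction with
  | empty => simpa using ultradensity_empty
  | insert a S _ ih =>
    rw [Finset.forall_mem_insert] at hA
    rw [Finset.set_biUnion_insert]
    have inclusion_exclusion := ultradensity_union_add_inter U (A a) (⋃ i ∈ S, A i)
    rw [hA.1, ih hA.2] at inclusion_exclusion
    linarith [ultradensity_nonneg (U := U) (A := A a ∪ ⋃ i ∈ S, A i),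
      ultradensity_nonneg (U := U) (A := A a ∩ ⋃ i ∈ S, A i)]

theorem ultradensity_biUnion_eq_sum {ι : Type*} {S : Finset ι} {A : ι → Set ℕ}
    (hA : (S : Set ι).Pairwise fun i j ↦ ultradensity U (A i ∩ A j) = 0) :
    ultradensity U (⋃ i ∈ S, A i) = ∑ i ∈ S, ultradensity U (A i) := by
  classical
  induction S using Finset.induction with
  | empty => simpa using ultradensity_empty
  | insert a S ha ih =>
    have inter_null : ultradensity U (A a ∩ ⋃ i ∈ S, A i) = 0 := by
      rw [inter_iUnion₂]
      refine ultradensity_biUnion_eq_zero fun i hi ↦ hA (by simp) (by simp [hi]) ?_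
      rintro rfl
      exact ha hi
    rw [Finset.set_biUnion_insert, Finset.sum_insert ha, ← ih (hA.mono (by simp)),
      ← ultradensity_union_add_inter, inter_null, add_zero]

theorem exists_ultradensity_inter_preimage_add_pos (hU : (U : Filter ℕ) ≤ atTop)
    (hA : 0 < ultradensity U A) : ∃ t > 0, 0 < ultradensity U (A ∩ (t + ·) ⁻¹' A) := by
  by_contra! hnull
  have translates_inter_null_of_lt {s t : ℕ} (hst : s < t) :
      ultradensity U ((s + ·) ⁻¹' A ∩ (t + ·) ⁻¹' A) = 0 := by
    have translate_inter : (s + ·) ⁻¹' A ∩ (t + ·) ⁻¹' A =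
        (s + ·) ⁻¹' (A ∩ (t - s + ·) ⁻¹' A) := by
      ext k
      simp only [mem_inter_iff, mem_preimage, show t - s + (s + k) = t + k by omega]
    rw [translate_inter, ultradensity_preimage_add hU]
    exact (hnull (t - s) (by omega)).antisymm ultradensity_nonneg
  have translates_inter_null (K : ℕ) : (Finset.range K : Set ℕ).Pairwise fun s t ↦
      ultradensity U ((s + ·) ⁻¹' A ∩ (t + ·) ⁻¹' A) = 0 := by
    intro s _ t _ hst
    rcases hst.lt_or_gt with hlt | hgt
    · exact translates_inter_null_of_lt hlt
    · rw [inter_comm]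
      exact translates_inter_null_of_lt hgt
  have mul_density_le_one (K : ℕ) : K * ultradensity U A ≤ 1 := by
    calc K * ultradensity U A = ∑ t ∈ Finset.range K, ultradensity U ((t + ·) ⁻¹' A) := by
          simp [ultradensity_preimage_add hU]
      _ = ultradensity U (⋃ t ∈ Finset.range K, (t + ·) ⁻¹' A) :=
          (ultradensity_biUnion_eq_sum (translates_inter_null K)).symm
      _ ≤ 1 := ultradensity_le_one
  obtain ⟨K, hK⟩ := exists_nat_gt (1 / ultradensity U A)
  exact (mul_density_le_one K).not_gt ((div_lt_iff₀ hA).1 hK)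

theorem tendsto_mul_pow_countBelow_rpow_inv (hU : (U : Filter ℕ) ≤ atTop) {K R : ℝ} (hK : 0 < K)
    (hR : 0 < R) (A : Set ℕ) :
    Tendsto (fun n : ℕ ↦ (K * R ^ countBelow A n) ^ (1 / (n : ℝ))) U
      (𝓝 (R ^ ultradensity U A)) := by
  have tendsto_root_const : Tendsto (fun n : ℕ ↦ K ^ (1 / (n : ℝ))) U (𝓝 1) := by
    simpa using (tendsto_const_nhds (x := K)).rpow
      (tendsto_one_div_atTop_nhds_zero_nat.mono_left hU) (Or.inl hK.ne')
  have tendsto_root_pow :=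
    (tendsto_const_nhds (x := R)).rpow (tendsto_ultradensity U A) (Or.inl hR.ne')
  rw [← one_mul (R ^ _)]
  refine (tendsto_root_const.mul tendsto_root_pow).congr fun n ↦ ?_
  rw [Real.mul_rpow hK.le (by positivity), ← Real.rpow_natCast, ← Real.rpow_mul hR.le,
    mul_one_div]

end Ultradensity

theorem exists_ultrafilter_forall_eventually_lt_of_le_limsup {ι : Type*} {F : Filter ι}
    {u : ι → ℝ} (hu : IsCoboundedUnder (· ≤ ·) F u) {δ : ℝ} (hδ : δ ≤ limsup u F) :
    ∃ U : Ultrafilter ι, (U : Filter ι) ≤ F ∧ ∀ c < δ, ∀ᶠ i in U, c < u i := by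
  -- `u` itself need not be bounded above; its truncation at `δ` clusters at `δ`.
  have cluster : MapClusterPt δ F fun i ↦ min (u i) δ := by
    refine mapClusterPt_iff_frequently.2 fun s hs ↦ ?_
    obtain ⟨c, hc, hcs⟩ := exists_Ioc_subset_of_mem_nhds hs (exists_lt δ)
    exact (frequently_lt_of_lt_limsup hu (hc.trans_le hδ)).mono fun i hi ↦
      hcs ⟨lt_min hi hc, min_le_right _ _⟩
  obtain ⟨U, hUF, hU⟩ := mapClusterPt_iff_ultrafilter.1 cluster
  exact ⟨U, hUF, fun c hc ↦ (hU.eventually_const_lt hc).mono fun i hi ↦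
    hi.trans_le (min_le_left _ _)⟩

/-- A nonnegative sub-multiplicative cocycle over `f` each of whose terms is bounded above. -/
structure IsSubmultCocycle {X : Type*} (f : X → X) (κ : ℕ → X → ℝ) : Prop where
  nonneg : ∀ n x, 0 ≤ κ n x
  le_mul : ∀ n m x, κ (n + m) x ≤ κ n x * κ m (f^[n] x)
  bddAbove : ∀ n, BddAbove (range (κ n))

namespace IsSubmultCocycle

variable {X : Type*} {f : X → X} {κ : ℕ → X → ℝ} {x : X} {N m : ℕ} {Z : Set ℕ}

theorem div_pow (hκ : IsSubmultCocycle f κ) {d : ℝ} (hd : 0 < d) :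
    IsSubmultCocycle f fun n y ↦ κ n y / d ^ n where
  nonneg n y := div_nonneg (hκ.nonneg n y) (by positivity)
  le_mul n m y := by
    rw [div_mul_div_comm, ← pow_add]
    gcongr
    exact hκ.le_mul n m y
  bddAbove n := by
    obtain ⟨b, hb⟩ := hκ.bddAbove n
    refine ⟨b / d ^ n, forall_mem_range.2 fun y ↦ ?_⟩
    gcongr
    exact hb (mem_range_self y)

theorem apply_add_mul_le_mul_pow_countBelow (hκ : IsSubmultCocycle f κ) (hN : 0 < N) {R : ℝ}
    (hR : 1 ≤ R) (hκR : ∀ y, κ N y ≤ R)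
    (hZ : ∀ j, m + N * j ∉ Z → κ N (f^[m + N * j] x) ≤ 1) (j : ℕ) :
    κ (m + N * j) x ≤ κ m x * R ^ countBelow Z (m + N * j) := by
  induction j with
  | zero => exact le_mul_of_one_le_right (hκ.nonneg m x) (one_le_pow₀ hR)
  | succ j ih =>
    have block_le : κ N (f^[m + N * j] x) ≤ R ^ Z.indicator 1 (m + N * j) := by
      by_cases hj : m + N * j ∈ Z
      · simpa [hj] using hκR _
      · simpa [hj] using hZ j hj
    have count_le : countBelow Z (m + N * j) + Z.indicator 1 (m + N * j) ≤
        countBelow Z (m + N * (j + 1)) := by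
      rw [← countBelow_succ]
      exact countBelow_monotone Z (by rw [mul_add]; omega)
    calc κ (m + N * (j + 1)) x = κ (m + N * j + N) x := by rw [mul_add, mul_one, add_assoc]
      _ ≤ κ (m + N * j) x * κ N (f^[m + N * j] x) := hκ.le_mul _ _ _
      _ ≤ κ m x * R ^ countBelow Z (m + N * j) * R ^ Z.indicator 1 (m + N * j) :=
          mul_le_mul ih block_le (hκ.nonneg _ _)
            (mul_nonneg (hκ.nonneg m x) (by positivity))
      _ ≤ κ m x * R ^ countBelow Z (m + N * (j + 1)) := by
          rw [mul_assoc, ← pow_add]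
          exact mul_le_mul_of_nonneg_left (pow_le_pow_right₀ hR count_le) (hκ.nonneg m x)

theorem exists_le_mul_pow_countBelow (hκ : IsSubmultCocycle f κ) (hN : 0 < N)
    (hZ : ∀ j, m + N * j ∉ Z → κ N (f^[m + N * j] x) ≤ 1) :
    ∃ K > 0, ∃ R > 0, ∀ n ≥ m, κ n x ≤ K * R ^ countBelow Z n := by
  obtain ⟨b, hb⟩ := hκ.bddAbove N
  obtain ⟨B, hB⟩ := (finite_Iio N).bddAbove_biUnion.2 fun r _ ↦ hκ.bddAbove r
  set R := max b 1
  have one_le_R : 1 ≤ R := le_max_right b 1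
  have R_pos : 0 < R := one_pos.trans_le one_le_R
  refine ⟨max (κ m x * B) 1, by positivity, R, R_pos, fun n hn ↦ ?_⟩
  set j := (n - m) / N
  set r := (n - m) % N
  have n_eq : m + N * j + r = n := by
    rw [add_assoc, Nat.div_add_mod, Nat.add_sub_cancel' hn]
  have block_bound := hκ.apply_add_mul_le_mul_pow_countBelow hN one_le_R
    (fun y ↦ (hb (mem_range_self y)).trans (le_max_left b 1)) hZ j
  have remainder_le : κ r (f^[m + N * j] x) ≤ B :=
    hB (mem_biUnion (mem_Iio.2 (Nat.mod_lt _ hN)) (mem_range_self _))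
  calc κ n x = κ (m + N * j + r) x := by rw [n_eq]
    _ ≤ κ (m + N * j) x * κ r (f^[m + N * j] x) := hκ.le_mul _ _ _
    _ ≤ κ m x * R ^ countBelow Z (m + N * j) * B :=
        mul_le_mul block_bound remainder_le (hκ.nonneg _ _)
          (mul_nonneg (hκ.nonneg m x) (by positivity))
    _ = κ m x * B * R ^ countBelow Z (m + N * j) := mul_right_comm _ _ _
    _ ≤ max (κ m x * B) 1 * R ^ countBelow Z n := by
        gcongr
        · exact le_max_left _ _
        · exact countBelow_monotone Z (n_eq ▸ Nat.le_add_right _ _)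

theorem eventually_rpow_inv_lt (hκ : IsSubmultCocycle f κ) {U : Ultrafilter ℕ}
    (hU : (U : Filter ℕ) ≤ atTop) (hN : 0 < N) {c d : ℝ} (hd : 0 < d) (hdc : d < c)
    (hZ : ∀ j, m + N * j ∉ Z → κ N (f^[m + N * j] x) ≤ d ^ N) (hZU : ultradensity U Z = 0) :
    ∀ᶠ n in U, κ n x ^ (1 / (n : ℝ)) < c := by
  obtain ⟨K, hK, R, hR, hKR⟩ := (hκ.div_pow hd).exists_le_mul_pow_countBelow hN
    fun j hj ↦ div_le_one_of_le₀ (hZ j hj) (by positivity)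
  have tendsto_bound := tendsto_mul_pow_countBelow_rpow_inv hU hK hR Z
  rw [hZU, Real.rpow_zero] at tendsto_bound
  filter_upwards [tendsto_bound.eventually_lt_const ((one_lt_div hd).2 hdc),
    hU (eventually_ge_atTop m), hU (eventually_ne_atTop 0)] with n hn hmn hn0
  calc κ n x ^ (1 / (n : ℝ)) = (κ n x / d ^ n) ^ (1 / (n : ℝ)) * d := by
        rw [Real.div_rpow (hκ.nonneg n x) (by positivity), one_div,
          Real.pow_rpow_inv_natCast hd.le hn0, div_mul_cancel₀ _ hd.ne']
    _ ≤ (K * R ^ countBelow Z n) ^ (1 / (n : ℝ)) * d := by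
        gcongr
        · exact (hκ.div_pow hd).nonneg n x
        · exact hKR n hmn
    _ < c / d * d := by gcongr
    _ = c := div_mul_cancel₀ c hd.ne'

end IsSubmultCocycle

/-- The set of times at which the orbit of `x` under `f` is in `C`. -/
def visitTimes {X : Type*} (f : X → X) (x : X) (C : Set X) : Set ℕ :=
  (f^[·] x) ⁻¹' C

section Noetherian

open TopologicalSpace

variable {X : Type*} [TopologicalSpace X] {f : X → X} {x : X} {U : Ultrafilter ℕ}

/-- `C` is minimal among the closed sets which the orbit of `x` under `f` visits with positive
density along `U`. -/
def IsMinimalVisited (U : Ultrafilter ℕ) (f : X → X) (x : X) (C : Closeds X) : Prop :=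
  Minimal (fun D : Closeds X ↦ 0 < ultradensity U (visitTimes f x D)) C

theorem exists_isMinimalVisited [NoetherianSpace X] (hU : (U : Filter ℕ) ≤ atTop) (f : X → X)
    (x : X) : ∃ C, IsMinimalVisited U f x C := by
  refine exists_minimal_of_wellFoundedLT _ ⟨⊤, ?_⟩
  have visit_univ : visitTimes f x (⊤ : Closeds X) = univ := eq_univ_of_forall fun n ↦ mem_univ _
  rw [visit_univ, ultradensity_univ hU]
  exact one_pos

theorem isClosedMap_iterate (hf : IsClosedMap f) (n : ℕ) : IsClosedMap f^[n] := by
  induction n with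
  | zero => exact IsClosedMap.id
  | succ n ih => exact ih.comp hf

namespace IsMinimalVisited

variable {C : Closeds X}

theorem subset_of_pos (hC : IsMinimalVisited U f x C) {D : Set X} (hD : IsClosed D) (hDC : D ⊆ C)
    (hpos : 0 < ultradensity U (visitTimes f x D)) : (C : Set X) ⊆ D :=
  (Minimal.le_of_le hC hpos hDC : C ≤ ⟨D, hD⟩)

theorem exists_iterate_mem (hC : IsMinimalVisited U f x C) : ∃ m, f^[m] x ∈ C := by
  by_contra! hno
  have visit_empty : visitTimes f x C = ∅ := eq_empty_of_forall_notMem hno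
  exact (visit_empty ▸ hC.prop).ne' ultradensity_empty

theorem exists_image_iterate_eq (hC : IsMinimalVisited U f x C) (hU : (U : Filter ℕ) ≤ atTop)
    (hf_cont : Continuous f) (hf_closed : IsClosedMap f) : ∃ t > 0, f^[t] '' C = C := by
  obtain ⟨t, ht, hrec⟩ := exists_ultradensity_inter_preimage_add_pos hU hC.prop
  have mapsTo : MapsTo f^[t] C C := by
    refine (hC.subset_of_pos (C.isClosed.inter (C.isClosed.preimage (hf_cont.iterate t)))
      inter_subset_left (hrec.trans_le (ultradensity_mono ?_))).trans inter_subset_right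
    rintro n ⟨hn, htn⟩
    rw [mem_preimage, visitTimes, mem_preimage, Function.iterate_add_apply] at htn
    exact ⟨hn, htn⟩
  have image_visited : 0 < ultradensity U (visitTimes f x (f^[t] '' C)) := by
    rw [← ultradensity_preimage_add hU _ t]
    refine hC.prop.trans_le (ultradensity_mono fun n hn ↦ ?_)
    exact ⟨f^[n] x, hn, (Function.iterate_add_apply f t n x).symm⟩
  exact ⟨t, ht, mapsTo.image_subset.antisymm
    (hC.subset_of_pos (isClosedMap_iterate hf_closed t _ C.isClosed) mapsTo.image_subset
      image_visited)⟩

theorem pow_le_of_mapsTo (hC : IsMinimalVisited U f x C) (hU : (U : Filter ℕ) ≤ atTop)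
    {κ : ℕ → X → ℝ} (hκ : IsSubmultCocycle f κ) (hκusc : ∀ n, UpperSemicontinuous (κ n))
    {δ : ℝ} (hδ : 0 < δ) (hκδ : ∀ c < δ, ∀ᶠ n in U, c < κ n x ^ (1 / (n : ℝ)))
    {N : ℕ} (hN : 0 < N) (hNC : MapsTo f^[N] C C) {y : X} (hy : y ∈ C) : δ ^ N ≤ κ N y := by
  by_contra! hlt
  obtain ⟨d, hyd, hdδ⟩ : ∃ d, κ N y ^ (1 / (N : ℝ)) < d ∧ d < δ := exists_between <| by
    rwa [one_div, Real.rpow_inv_lt_iff_of_pos (hκ.nonneg N y) hδ.le (by positivity),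
      Real.rpow_natCast]
  have hd : 0 < d := (Real.rpow_nonneg (hκ.nonneg N y) _).trans_lt hyd
  rw [one_div, Real.rpow_inv_lt_iff_of_pos (hκ.nonneg N y) hd.le (by positivity),
    Real.rpow_natCast] at hyd
  obtain ⟨c, hdc, hcδ⟩ := exists_between hdδ
  obtain ⟨m, hm⟩ := hC.exists_iterate_mem
  have orbit_mem (j : ℕ) : f^[m + N * j] x ∈ C := by
    rw [add_comm, Function.iterate_add_apply, Function.iterate_mul]
    exact hNC.iterate j hm
  have large_null : ultradensity U (visitTimes f x (C ∩ κ N ⁻¹' Ici (d ^ N))) = 0 := by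
    refine (not_lt.1 fun hpos ↦ ?_).antisymm ultradensity_nonneg
    have subset_large := hC.subset_of_pos
      (C.isClosed.inter ((hκusc N).isClosed_preimage _)) inter_subset_left hpos
    exact hyd.not_ge (subset_large hy).2
  have block_le (j : ℕ) (hj : m + N * j ∉ visitTimes f x (C ∩ κ N ⁻¹' Ici (d ^ N))) :
      κ N (f^[m + N * j] x) ≤ d ^ N :=
    (not_le.1 fun hle ↦ hj ⟨orbit_mem j, hle⟩).le
  have growth_lt := hκ.eventually_rpow_inv_lt hU hN hd hdc block_le large_null
  obtain ⟨n, hlt, hgt⟩ := (growth_lt.and (hκδ c hcδ)).exists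
  exact hlt.not_gt hgt

end IsMinimalVisited

theorem exists_isClosed_image_iterate_eq_forall_pow_le [NoetherianSpace X]
    (hf_cont : Continuous f) (hf_closed : IsClosedMap f) {κ : ℕ → X → ℝ}
    (hκ : IsSubmultCocycle f κ) (hκusc : ∀ n, UpperSemicontinuous (κ n)) {δ : ℝ} (hδ : 0 < δ)
    (hx : δ ≤ limsup (fun n : ℕ ↦ κ n x ^ (1 / (n : ℝ))) atTop) :
    ∃ C : Set X, IsClosed C ∧ (∃ m, f^[m] x ∈ C) ∧
      ∃ t > 0, ∀ q > 0, f^[t * q] '' C = C ∧ ∀ y ∈ C, δ ^ (t * q) ≤ κ (t * q) y := by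
  have cobounded : IsCoboundedUnder (· ≤ ·) atTop fun n : ℕ ↦ κ n x ^ (1 / (n : ℝ)) :=
    (isBoundedUnder_of ⟨0, fun n ↦ Real.rpow_nonneg (hκ.nonneg n x) _⟩ :
      IsBoundedUnder (· ≥ ·) atTop _).isCoboundedUnder_le
  obtain ⟨U, hU, hκδ⟩ := exists_ultrafilter_forall_eventually_lt_of_le_limsup cobounded hx
  obtain ⟨C, hC⟩ := exists_isMinimalVisited hU f x
  obtain ⟨t, ht, htC⟩ := hC.exists_image_iterate_eq hU hf_cont hf_closed
  refine ⟨C, C.isClosed, hC.exists_iterate_mem, t, ht, fun q hq ↦ ?_⟩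
  have image_eq : f^[t * q] '' C = C := by
    rw [Function.iterate_mul, image_iterate_eq]
    exact Function.IsFixedPt.iterate htC q
  exact ⟨image_eq, fun y hy ↦ hC.pow_le_of_mapsTo hU hκ hκusc hδ hκδ (Nat.mul_pos ht hq)
    (mapsTo_iff_image_subset.2 image_eq.subset) hy⟩

theorem stmt_13_general [NoetherianSpace X] (hf_cont : Continuous f) (hf_closed : IsClosedMap f)
    {κ : ℕ → X → ℝ} (hκ0 : ∀ n x, 0 ≤ κ n x) (hκusc : ∀ n, UpperSemicontinuous (κ n))
    (hκsub : ∀ n m x, κ (n + m) x ≤ κ n x * κ m (f^[n] x))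
    {κneg : ℕ → X → ℝ} (hκneg : ∀ n x, IsGreatest (κ n '' (f^[n] ⁻¹' {x})) (κneg n x))
    {κm : X → ℝ}
    (hκm : ∀ x, Tendsto (fun n : ℕ ↦ κneg n x ^ (1 / (n : ℝ))) atTop (𝓝 (κm x)))
    {δ : ℝ} (hδ : 0 < δ) (hx : δ ≤ limsup (fun n : ℕ ↦ κ n x ^ (1 / (n : ℝ))) atTop) :
    ∃ m : ℕ, δ ≤ κm (f^[m] x) := by
  have hκ : IsSubmultCocycle f κ := ⟨hκ0, hκsub, fun n ↦ by
    simpa using ((hκusc n).upperSemicontinuousOn univ).bddAbove_of_isCompact isCompact_univ⟩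
  obtain ⟨C, -, ⟨m, hm⟩, t, ht, hC⟩ :=
    exists_isClosed_image_iterate_eq_forall_pow_le hf_cont hf_closed hκ hκusc hδ hx
  refine ⟨m, ge_of_tendsto ((hκm (f^[m] x)).comp (tendsto_id.const_mul_atTop' ht)) ?_⟩
  filter_upwards [eventually_gt_atTop 0] with q hq
  obtain ⟨image_eq, pow_le⟩ := hC q hq
  obtain ⟨z, hz, hzm⟩ : f^[m] x ∈ f^[t * q] '' C := image_eq.symm ▸ hm
  have pow_le_κneg : δ ^ (t * q) ≤ κneg (t * q) (f^[m] x) :=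
    (pow_le z hz).trans ((hκneg _ _).2 ⟨z, hzm, rfl⟩)
  calc δ = (δ ^ (t * q)) ^ (1 / ((t * q : ℕ) : ℝ)) := by
        rw [one_div, Real.pow_rpow_inv_natCast hδ.le (Nat.mul_pos ht hq).ne']
    _ ≤ κneg (t * q) (f^[m] x) ^ (1 / ((t * q : ℕ) : ℝ)) := by gcongr

end Noetherian

/-- If `limsup [κ_n(x)]^{1/n} ≥ δ > 1`, then some iterate of `f` sends `x` into
the invariant set `{κ₋ ≥ δ}`. -/
theorem stmt_13 {X : Type*} [TopologicalSpace X] [Nonempty X]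
    [TopologicalSpace.NoetherianSpace X] [IrreducibleSpace X]
    (f : X → X) (hf_cont : Continuous f) (hf_open : IsOpenMap f)
    (hf_closed : IsClosedMap f) (hf_surj : Function.Surjective f)
    (κ : ℕ → X → ℝ)
    (hκ1 : ∀ n x, 1 ≤ κ n x)
    (hκmin : ∀ n, ∃ x, κ n x = 1)
    (hκusc : ∀ n (δ : ℝ), IsClosed {x : X | δ ≤ κ n x})
    (hκsub : ∀ n m x, κ (n + m) x ≤ κ n x * κ m (f^[n] x))
    (κneg : ℕ → X → ℝ)
    (hκneg : ∀ n x, IsGreatest (κ n '' (f^[n] ⁻¹' {x})) (κneg n x))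
    (hBaire : ∀ Y : Set X, Y.Nonempty → IsClosed Y → IsIrreducible Y →
      ∀ Z : ℕ → Set X, (∀ i, IsClosed (Z i) ∧ Z i ⊂ Y) → Y ≠ ⋃ i, Z i)
    (k : ℕ) (hdimX : topologicalKrullDim X = (k : ℕ∞))
    (κm : X → ℝ)
    (hκm : ∀ x : X,
      Tendsto (fun n : ℕ => (κneg n x) ^ (1 / (n : ℝ))) atTop (nhds (κm x)))
    (δ : ℝ) (hδ : 1 < δ) (x : X)
    (hx : δ ≤ limsup (fun n : ℕ => (κ n x) ^ (1 / (n : ℝ))) atTop) :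
    ∃ m : ℕ, δ ≤ κm (f^[m] x) := by
  exact stmt_13_general hf_cont hf_closed (fun n x ↦ zero_le_one.trans (hκ1 n x))
    (fun n ↦ upperSemicontinuous_iff_isClosed_preimage.2 (hκusc n)) hκsub hκneg hκm
    (one_pos.trans hδ) hx
end

section
/- For every x ∈ X there exist a real constant c ≥ 1 and an integer L ≥ 0 such that for every l ≥ L the sequence [κ_n(f^[l](x))]^{1/n} converges to c as n → ∞ (in particular the limit does not depend on l ≥ L); moreover there exists an integer m ≥ 0 such that κ_-(f^[m](x)) ≥ c, i.e. x is sent by an iterate of f to the invariant set {κ_- ≥ c}. -/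
open Filter

/-!
Pass to logarithms `a n = log (κ n)`, a nonnegative subadditive cocycle. By Noetherianity, among
the closures of the sets `{f^[s + p * j] x | j ∈ ℕ}` with `p > 0` there is a minimal one, `W`;
minimality says that every arithmetic progression of times along the orbit of `y = f^[s] x` under
`f^[p]` is still dense in `W`. Let `c` be the infimum of `a n z / n` over `z ∈ W` and `n > 0`
divisible by `p`, so that `a n y / n` is asymptotically at least `c`. Conversely, if
`a N z / N < t` for some `z ∈ W`, then `{t * N ≤ a N}` is a closed set not containing `W`. The
set of times at which an orbit visits a closed set has zero density unless it contains an
arithmetic progression, so these bad times are negligible and subadditivity gives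
`limsup a n y / n ≤ t`. Finally `f^[p]` maps `W` onto itself, because its image is closed, so `y`
has preimages in `W` under all iterates of `f^[p]`, and `a ≥ n * c` there.
-/

open Asymptotics Topology TopologicalSpace

section LinearGrowth

lemma const_isLittleO_natCast (C : ℝ) : (fun _ : ℕ ↦ C) =o[atTop] (fun n : ℕ ↦ (n : ℝ)) :=
  isLittleO_const_left.2 (.inr (tendsto_norm_atTop_atTop.comp tendsto_natCast_atTop_atTop))

lemma eventually_mul_add_lt_mul_of_isLittleO {u : ℕ → ℝ}
    (hu : u =o[atTop] (fun n : ℕ ↦ (n : ℝ))) {s t : ℝ} (hst : s < t) :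
    ∀ᶠ n : ℕ in atTop, n * s + u n < n * t := by
  filter_upwards [hu.bound (half_pos (sub_pos.2 hst)), eventually_gt_atTop 0] with n hn hpos
  have hun : u n ≤ (t - s) / 2 * n := by
    simpa using (le_abs_self _).trans hn
  have : 0 < (t - s) * n := mul_pos (sub_pos.2 hst) (Nat.cast_pos.2 hpos)
  linarith

lemma neg_natCast_mul_le_mul_abs {r N : ℕ} (hr : r ≤ N) (s : ℝ) : -(r * s) ≤ N * |s| :=
  calc -(r * s) = r * -s := (mul_neg _ _).symm
    _ ≤ r * |s| := by gcongr; exact neg_le_abs s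
    _ ≤ N * |s| := by gcongr

lemma tendsto_div_of_eventually {u : ℕ → ℝ} {c : ℝ}
    (hlower : ∀ t < c, ∀ᶠ n : ℕ in atTop, n * t < u n)
    (hupper : ∀ t > c, ∀ᶠ n : ℕ in atTop, u n < n * t) :
    Tendsto (fun n : ℕ ↦ u n / n) atTop (𝓝 c) := by
  refine tendsto_order.2 ⟨fun t ht ↦ ?_, fun t ht ↦ ?_⟩
  · filter_upwards [hlower t ht, eventually_gt_atTop 0] with n hn hpos
    exact (lt_div_iff₀' (Nat.cast_pos.2 hpos)).2 hn
  · filter_upwards [hupper t ht, eventually_gt_atTop 0] with n hn hpos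
    exact (div_lt_iff₀' (Nat.cast_pos.2 hpos)).2 hn

lemma tendsto_add_const_div {u : ℕ → ℝ} {c : ℝ}
    (hu : Tendsto (fun n : ℕ ↦ u n / n) atTop (𝓝 c)) (C : ℝ) :
    Tendsto (fun n : ℕ ↦ (u n + C) / n) atTop (𝓝 c) := by
  simpa only [add_div, add_zero] using hu.add (tendsto_const_div_atTop_nhds_zero_nat C)

lemma tendsto_shift_div_iff {u : ℕ → ℝ} {c : ℝ} (d : ℕ) :
    Tendsto (fun n : ℕ ↦ u (n + d) / n) atTop (𝓝 c) ↔
      Tendsto (fun n : ℕ ↦ u n / n) atTop (𝓝 c) := by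
  have hratio : Tendsto (fun n : ℕ ↦ (n : ℝ) / (n + d : ℕ)) atTop (𝓝 1) := by
    simpa only [Nat.cast_add] using tendsto_natCast_div_add_atTop (d : ℝ)
  rw [← tendsto_mul_iff_of_ne_zero hratio one_ne_zero, mul_one,
    ← tendsto_add_atTop_iff_nat (f := fun n : ℕ ↦ u n / n) d]
  refine tendsto_congr' ((eventually_ne_atTop 0).mono fun n hn ↦ ?_)
  exact div_mul_div_cancel₀ (Nat.cast_ne_zero.2 hn)

end LinearGrowth

section ZeroDensity

/-- A set of natural numbers has (asymptotic) density zero: it has `o(n)` elements below `n`. The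
counting function is a sum of indicators, so that it compares termwise with Birkhoff sums. -/
def HasZeroDensity (A : Set ℕ) : Prop :=
  (fun n : ℕ ↦ ∑ i ∈ Finset.range n, A.indicator (1 : ℕ → ℝ) i) =o[atTop] (fun n : ℕ ↦ (n : ℝ))

lemma hasZeroDensity_empty : HasZeroDensity ∅ := by
  simp [HasZeroDensity]

lemma sum_indicator_le_of_separated {A : Set ℕ} {K : ℕ} (hK : 0 < K)
    (hA : ∀ i ∈ A, ∀ k ∈ Finset.Ico 1 K, i + k ∉ A) (n : ℕ) :
    ∑ i ∈ Finset.range n, A.indicator (1 : ℕ → ℝ) i ≤ n * (K : ℝ)⁻¹ + 1 := by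
  classical
  have hinj : Set.InjOn (· / K) ((Finset.range n).filter (· ∈ A) : Set ℕ) := by
    have not_lt_of_div_eq {i j : ℕ} (hi : i ∈ A) (hj : j ∈ A) (hij : i / K = j / K) : ¬ i < j := by
      intro hlt
      have hi_div := Nat.div_add_mod i K
      have hj_div := Nat.div_add_mod j K
      rw [hij] at hi_div
      have hjK := Nat.mod_lt j hK
      refine hA i hi (j - i) (Finset.mem_Ico.2 ⟨by omega, by omega⟩) ?_
      rwa [Nat.add_sub_cancel' hlt.le]
    intro i hi j hj hij
    have hiA := (Finset.mem_filter.1 hi).2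
    have hjA := (Finset.mem_filter.1 hj).2
    exact le_antisymm (not_lt.1 (not_lt_of_div_eq hjA hiA hij.symm))
      (not_lt.1 (not_lt_of_div_eq hiA hjA hij))
  have hmaps : Set.MapsTo (· / K) ((Finset.range n).filter (· ∈ A) : Set ℕ)
      (Finset.range (n / K + 1) : Set ℕ) := by
    intro i hi
    have hin := Finset.mem_range.1 (Finset.mem_filter.1 hi).1
    exact Finset.mem_coe.2 (Finset.mem_range.2 (Nat.lt_succ_of_le (Nat.div_le_div_right hin.le)))
  calc ∑ i ∈ Finset.range n, A.indicator (1 : ℕ → ℝ) i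
      = ((Finset.range n).filter (· ∈ A)).card := by
        simp [Set.indicator_apply]
    _ ≤ ((n / K + 1 : ℕ) : ℝ) := by
        exact_mod_cast (Finset.card_le_card_of_injOn _ hmaps hinj).trans_eq (Finset.card_range _)
    _ ≤ n * (K : ℝ)⁻¹ + 1 := by
        have : ((n / K : ℕ) : ℝ) ≤ n * (K : ℝ)⁻¹ := Nat.cast_div_le
        push_cast
        linarith

lemma indicator_le_isolated_add_sum_returns (A : Set ℕ) (K i : ℕ) :
    A.indicator (1 : ℕ → ℝ) i ≤
      {i | i ∈ A ∧ ∀ k ∈ Finset.Ico 1 K, i + k ∉ A}.indicator 1 i +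
        ∑ k ∈ Finset.Ico 1 K, {i | i ∈ A ∧ i + k ∈ A}.indicator 1 i := by
  have hnonneg (B : Set ℕ) : 0 ≤ B.indicator (1 : ℕ → ℝ) i :=
    Set.indicator_nonneg (fun _ _ ↦ zero_le_one) i
  have hsum := Finset.sum_nonneg fun k (_ : k ∈ Finset.Ico 1 K) ↦
    hnonneg {i | i ∈ A ∧ i + k ∈ A}
  by_cases hi : i ∈ A
  · rw [Set.indicator_of_mem hi]
    by_cases hgap : ∀ k ∈ Finset.Ico 1 K, i + k ∉ A
    · rw [Set.indicator_of_mem (show i ∈ {i | i ∈ A ∧ ∀ k ∈ Finset.Ico 1 K, i + k ∉ A} from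
        ⟨hi, hgap⟩)]
      exact le_add_of_nonneg_right hsum
    · push Not at hgap
      obtain ⟨k, hk, hik⟩ := hgap
      have hsingle := Finset.single_le_sum
        (f := fun k ↦ {i | i ∈ A ∧ i + k ∈ A}.indicator (1 : ℕ → ℝ) i) (fun k _ ↦ hnonneg _) hk
      rw [Set.indicator_of_mem (show i ∈ {i | i ∈ A ∧ i + k ∈ A} from ⟨hi, hik⟩)] at hsingle
      exact le_add_of_nonneg_of_le (hnonneg _) hsingle
  · rw [Set.indicator_of_notMem hi]
    exact add_nonneg (hnonneg _) hsum

lemma sum_indicator_le_add_sum_returns (A : Set ℕ) {K : ℕ} (hK : 0 < K) (n : ℕ) :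
    ∑ i ∈ Finset.range n, A.indicator (1 : ℕ → ℝ) i ≤
      n * (K : ℝ)⁻¹ + (1 + ∑ k ∈ Finset.Ico 1 K,
        ∑ i ∈ Finset.range n, {i | i ∈ A ∧ i + k ∈ A}.indicator (1 : ℕ → ℝ) i) := by
  set isolated : Set ℕ := {i | i ∈ A ∧ ∀ k ∈ Finset.Ico 1 K, i + k ∉ A}
  have hisolated := sum_indicator_le_of_separated hK
    (fun i (hi : i ∈ isolated) k hk (hik : i + k ∈ isolated) ↦ hi.2 k hk hik.1) n
  have hsum := Finset.sum_le_sum fun i (_ : i ∈ Finset.range n) ↦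
    indicator_le_isolated_add_sum_returns A K i
  rw [Finset.sum_add_distrib, Finset.sum_comm] at hsum
  linarith

lemma hasZeroDensity_of_returns {A : Set ℕ}
    (h : ∀ k, 0 < k → HasZeroDensity {i | i ∈ A ∧ i + k ∈ A}) : HasZeroDensity A := by
  refine isLittleO_iff.2 fun ε hε ↦ ?_
  obtain ⟨K, hK⟩ := exists_nat_gt ε⁻¹
  have hKpos : 0 < K := Nat.cast_pos.1 ((inv_pos.2 hε).trans hK)
  have hreturns : (fun n : ℕ ↦ 1 + ∑ k ∈ Finset.Ico 1 K, ∑ i ∈ Finset.range n,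
      {i | i ∈ A ∧ i + k ∈ A}.indicator (1 : ℕ → ℝ) i) =o[atTop] (fun n : ℕ ↦ (n : ℝ)) :=
    (const_isLittleO_natCast 1).add
      (IsLittleO.fun_sum fun k hk ↦ h k (Finset.mem_Ico.1 hk).1)
  filter_upwards [eventually_mul_add_lt_mul_of_isLittleO hreturns (inv_lt_of_inv_lt₀ hε hK)]
    with n hn
  have hnonneg : 0 ≤ ∑ i ∈ Finset.range n, A.indicator (1 : ℕ → ℝ) i :=
    Finset.sum_nonneg fun i _ ↦ Set.indicator_nonneg (fun _ _ ↦ zero_le_one) i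
  rw [Real.norm_of_nonneg hnonneg, Real.norm_natCast, mul_comm ε]
  exact (sum_indicator_le_add_sum_returns A hKpos n).trans hn.le

end ZeroDensity

section Boundedness

lemma exists_forall_le_of_bddAbove {α β : Type*} [SemilatticeSup β] [Nonempty β] {a : ℕ → α → β}
    (hbdd : ∀ n, BddAbove (Set.range (a n))) (N : ℕ) : ∃ B, ∀ r ≤ N, ∀ z, a r z ≤ B := by
  obtain ⟨B, hB⟩ := (Set.finite_Iic N).bddAbove_biUnion.2 fun r _ ↦ hbdd r
  exact ⟨B, fun r hr z ↦ hB (Set.mem_biUnion hr ⟨z, rfl⟩)⟩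

lemma bddAbove_range_of_upperSemicontinuous {α β : Type*} [TopologicalSpace α] [CompactSpace α]
    [LinearOrder β] [Nonempty β] {φ : α → β} (hφ : UpperSemicontinuous φ) :
    BddAbove (Set.range φ) := by
  rw [← Set.image_univ]
  exact (hφ.upperSemicontinuousOn _).bddAbove_of_isCompact isCompact_univ

end Boundedness

section OrbitClosure

variable {X : Type*} [TopologicalSpace X] {g : X → X} {y : X}

lemma isClosedMap_iterate_s16 (hg : IsClosedMap g) (n : ℕ) : IsClosedMap g^[n] :=
  Nat.recOn n IsClosedMap.id fun _ ih ↦ ih.comp hg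

theorem exists_progression_mem_of_not_hasZeroDensity [NoetherianSpace X] (hg : Continuous g)
    (y : X) (Z : Closeds X) (hZ : ¬ HasZeroDensity {j | g^[j] y ∈ Z}) :
    ∃ b r : ℕ, 0 < r ∧ ∀ j, g^[b + r * j] y ∈ Z := by
  induction Z using WellFoundedLT.induction with
  | ind Z ih =>
  obtain ⟨k, hk, hreturns⟩ : ∃ k, 0 < k ∧ ¬ HasZeroDensity {j | g^[j] y ∈ Z ∧ g^[j + k] y ∈ Z} := by
    contrapose! hZ
    exact hasZeroDensity_of_returns hZ
  let Z' : Closeds X := Z ⊓ ⟨g^[k] ⁻¹' Z, Z.isClosed.preimage (hg.iterate k)⟩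
  have mem_Z' (j : ℕ) : g^[j] y ∈ Z' ↔ g^[j] y ∈ Z ∧ g^[j + k] y ∈ Z := by
    rw [add_comm, Function.iterate_add_apply]
    rfl
  rcases (inf_le_left : Z' ≤ Z).lt_or_eq with hlt | heq
  · obtain ⟨b, r, hr, hbr⟩ := ih Z' hlt (by simpa only [mem_Z'] using hreturns)
    exact ⟨b, r, hr, fun j ↦ ((mem_Z' _).1 (hbr j)).1⟩
  · obtain ⟨b, hb⟩ : {j | g^[j] y ∈ Z}.Nonempty := by
      rw [Set.nonempty_iff_ne_empty]
      exact fun hempty ↦ hZ (hempty ▸ hasZeroDensity_empty)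
    refine ⟨b, k, hk, fun j ↦ ?_⟩
    induction j with
    | zero => exact hb
    | succ j ihj =>
      rw [← heq, mem_Z'] at ihj
      rw [mul_add_one, ← add_assoc]
      exact ihj.2

/-- The closure of the forward orbit of `y` under `g`. -/
def orbitClosure (g : X → X) (y : X) : Closeds X :=
  Closeds.closure (Set.range fun j ↦ g^[j] y)

lemma orbitClosure_le_iff {Z : Closeds X} : orbitClosure g y ≤ Z ↔ ∀ j, g^[j] y ∈ Z :=
  Closeds.closure_le.trans Set.range_subset_iff

lemma iterate_mem_orbitClosure (g : X → X) (y : X) (j : ℕ) : g^[j] y ∈ orbitClosure g y :=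
  orbitClosure_le_iff.1 le_rfl j

lemma self_mem_orbitClosure (g : X → X) (y : X) : y ∈ orbitClosure g y :=
  iterate_mem_orbitClosure g y 0

lemma orbitClosure_iterate_le (g : X → X) (y : X) (b r : ℕ) :
    orbitClosure g^[r] (g^[b] y) ≤ orbitClosure g y := by
  refine orbitClosure_le_iff.2 fun j ↦ ?_
  rw [← Function.iterate_mul, ← Function.iterate_add_apply]
  exact iterate_mem_orbitClosure g y _

/-- Every arithmetic progression of times along the orbit of `y` has the same closure as the whole
orbit. This is total transitivity of `g` on that closure, witnessed by `y`. -/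
def HasStableOrbitClosure (g : X → X) (y : X) : Prop :=
  ∀ b r : ℕ, 0 < r → orbitClosure g^[r] (g^[b] y) = orbitClosure g y

theorem exists_hasStableOrbitClosure [NoetherianSpace X] (f : X → X) (x : X) :
    ∃ s p : ℕ, 0 < p ∧ HasStableOrbitClosure f^[p] (f^[s] x) := by
  obtain ⟨⟨s, p⟩, hp, hmin⟩ := exists_minimalFor_of_wellFoundedLT
    (fun i : ℕ × ℕ ↦ 0 < i.2) (fun i ↦ orbitClosure f^[i.2] (f^[i.1] x)) ⟨(0, 1), one_pos⟩
  refine ⟨s, p, hp, fun b r hr ↦ ?_⟩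
  have hle := orbitClosure_iterate_le f^[p] (f^[s] x) b r
  refine hle.antisymm ?_
  rw [← Function.iterate_mul, ← Function.iterate_mul, ← Function.iterate_add_apply] at hle ⊢
  exact hmin (j := (p * b + s, p * r)) (Nat.mul_pos hp hr) hle

namespace HasStableOrbitClosure

lemma iterate (h : HasStableOrbitClosure g y) (q : ℕ) {r : ℕ} (hr : 0 < r) :
    HasStableOrbitClosure g^[r] (g^[q] y) := by
  intro b r' hr'
  rw [h q r hr, ← Function.iterate_mul, ← Function.iterate_mul, ← Function.iterate_add_apply]
  exact h _ _ (Nat.mul_pos hr hr')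

lemma hasZeroDensity [NoetherianSpace X] (h : HasStableOrbitClosure g y) (hg : Continuous g)
    {Z : Closeds X} (hZ : ¬ orbitClosure g y ≤ Z) : HasZeroDensity {j | g^[j] y ∈ Z} := by
  by_contra hdensity
  obtain ⟨b, r, hr, hbr⟩ := exists_progression_mem_of_not_hasZeroDensity hg y Z hdensity
  refine hZ ((h b r hr).ge.trans (orbitClosure_le_iff.2 fun j ↦ ?_))
  rw [← Function.iterate_mul, ← Function.iterate_add_apply, add_comm]
  exact hbr j

lemma surjOn (h : HasStableOrbitClosure g y) (hg : IsClosedMap g) :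
    Set.SurjOn g (orbitClosure g y) (orbitClosure g y) := by
  have hle : orbitClosure g^[1] (g^[1] y) ≤ ⟨_, hg _ (orbitClosure g y).isClosed⟩ :=
    orbitClosure_le_iff.2 fun j ↦
      ⟨g^[j] y, iterate_mem_orbitClosure g y j, (Function.Commute.refl g).iterate_right j y⟩
  exact (h 1 1 one_pos).ge.trans hle

end HasStableOrbitClosure

end OrbitClosure

/-- A subadditive cocycle over `f`: the logarithmic form of a sub-multiplicative cocycle. -/
def IsSubadditiveCocycle {X : Type*} (f : X → X) (a : ℕ → X → ℝ) : Prop :=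
  ∀ n m x, a (n + m) x ≤ a n x + a m (f^[n] x)

namespace IsSubadditiveCocycle

section Growth

variable {X : Type*} {f : X → X} {a : ℕ → X → ℝ} {y : X}

lemma iterate (ha : IsSubadditiveCocycle f a) (N : ℕ) :
    IsSubadditiveCocycle f^[N] (fun n ↦ a (N * n)) := by
  intro n m x
  simpa only [mul_add, Function.iterate_mul] using ha (N * n) (N * m) x

lemma le_add_sum (ha : IsSubadditiveCocycle f a) (n : ℕ) (y : X) :
    a n y ≤ a 0 y + ∑ j ∈ Finset.range n, a 1 (f^[j] y) := by
  induction n with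
  | zero => simp
  | succ n ih =>
    rw [Finset.sum_range_succ]
    linarith [ha n 1 y]

lemma eventually_lt_mul_of_hasZeroDensity (ha : IsSubadditiveCocycle f a)
    (hbdd : BddAbove (Set.range (a 1))) {s t : ℝ} (hst : s < t)
    (hs : HasZeroDensity {j | s ≤ a 1 (f^[j] y)}) : ∀ᶠ n : ℕ in atTop, a n y < n * t := by
  obtain ⟨B, hB⟩ := hbdd
  set bad : Set ℕ := {j | s ≤ a 1 (f^[j] y)}
  have hterm (j : ℕ) : a 1 (f^[j] y) ≤ s + (B - s) * bad.indicator 1 j := by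
    by_cases hj : j ∈ bad
    · simpa [hj] using hB ⟨_, rfl⟩
    · simpa [hj] using (not_le.1 hj).le
  have herror : (fun n : ℕ ↦ a 0 y + (B - s) * ∑ j ∈ Finset.range n, bad.indicator (1 : ℕ → ℝ) j)
      =o[atTop] (fun n : ℕ ↦ (n : ℝ)) :=
    (const_isLittleO_natCast _).add (hs.const_mul_left _)
  filter_upwards [eventually_mul_add_lt_mul_of_isLittleO herror hst] with n hn
  calc a n y ≤ a 0 y + ∑ j ∈ Finset.range n, a 1 (f^[j] y) := ha.le_add_sum n y
    _ ≤ a 0 y + ∑ j ∈ Finset.range n, (s + (B - s) * bad.indicator 1 j) := by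
        gcongr with j
        exact hterm j
    _ = n * s + (a 0 y + (B - s) * ∑ j ∈ Finset.range n, bad.indicator 1 j) := by
        rw [Finset.sum_add_distrib, ← Finset.mul_sum, Finset.sum_const, Finset.card_range,
          nsmul_eq_mul]
        ring
    _ < n * t := hn

lemma eventually_lt_mul_of_multiples (ha : IsSubadditiveCocycle f a)
    (hbdd : ∀ n, BddAbove (Set.range (a n))) {N : ℕ} (hN : 0 < N) {s t : ℝ} (hst : s < t)
    (h : ∀ᶠ n : ℕ in atTop, a (N * n) y < n * (N * s)) : ∀ᶠ n : ℕ in atTop, a n y < n * t := by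
  obtain ⟨B, hB⟩ := exists_forall_le_of_bddAbove hbdd N
  filter_upwards [(Nat.tendsto_div_const_atTop hN.ne').eventually h,
    eventually_mul_add_lt_mul_of_isLittleO (const_isLittleO_natCast (N * |s| + B)) hst]
    with n hmul hn
  have hr : n % N ≤ N := (Nat.mod_lt n hN).le
  have hdiv : (N : ℝ) * (n / N : ℕ) + (n % N : ℕ) = n := mod_cast Nat.div_add_mod n N
  have hrs : -((n % N : ℕ) * s) ≤ N * |s| := neg_natCast_mul_le_mul_abs hr s
  calc a n y = a (N * (n / N) + n % N) y := by rw [Nat.div_add_mod]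
    _ ≤ a (N * (n / N)) y + a (n % N) (f^[N * (n / N)] y) := ha _ _ y
    _ ≤ (n / N : ℕ) * (N * s) + B := add_le_add hmul.le (hB _ hr _)
    _ = n * s - (n % N : ℕ) * s + B := by rw [← hdiv]; ring
    _ ≤ n * s + (N * |s| + B) := by linarith
    _ < n * t := hn

lemma eventually_mul_lt_of_multiples (ha : IsSubadditiveCocycle f a)
    (hbdd : ∀ n, BddAbove (Set.range (a n))) {N : ℕ} (hN : 0 < N) {s t : ℝ} (hst : t < s)
    (h : ∀ᶠ n : ℕ in atTop, n * (N * s) ≤ a (N * n) y) : ∀ᶠ n : ℕ in atTop, n * t < a n y := by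
  obtain ⟨B, hB⟩ := exists_forall_le_of_bddAbove hbdd N
  have hsucc : Tendsto (fun n ↦ n / N + 1) atTop atTop :=
    (tendsto_add_atTop_nat 1).comp (Nat.tendsto_div_const_atTop hN.ne')
  filter_upwards [hsucc.eventually h,
    eventually_mul_add_lt_mul_of_isLittleO (const_isLittleO_natCast (N * |s| + B)) hst]
    with n hmul hn
  obtain ⟨r, hr⟩ : ∃ r, n + r = N * (n / N + 1) :=
    Nat.exists_eq_add_of_le (Nat.lt_mul_div_succ n hN).le |>.imp fun _ h ↦ h.symm
  have hrN : r ≤ N := by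
    have := Nat.mul_div_le n N
    rw [mul_add_one] at hr
    omega
  have hr_cast : (n : ℝ) + r = N * (n / N + 1 : ℕ) := mod_cast hr
  have hrs : -(r * s) ≤ N * |s| := neg_natCast_mul_le_mul_abs hrN s
  have hsub : a (N * (n / N + 1)) y ≤ a n y + B := by
    rw [← hr]
    exact (ha n r y).trans (by gcongr; exact hB r hrN _)
  have hmul' : n * s + r * s ≤ a (N * (n / N + 1)) y := by
    rw [← add_mul, hr_cast]
    linarith
  linarith

lemma tendsto_div_of_between (ha : IsSubadditiveCocycle f a)
    (hbdd : ∀ n, BddAbove (Set.range (a n))) {c : ℝ} {d e : ℕ} (hde : d ≤ e)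
    (hy : Tendsto (fun n : ℕ ↦ a n y / n) atTop (𝓝 c))
    (hfy : Tendsto (fun n : ℕ ↦ a n (f^[e] y) / n) atTop (𝓝 c)) :
    Tendsto (fun n : ℕ ↦ a n (f^[d] y) / n) atTop (𝓝 c) := by
  obtain ⟨k, rfl⟩ := Nat.exists_eq_add_of_le' hde
  obtain ⟨B, hB⟩ := hbdd k
  rw [← tendsto_shift_div_iff k]
  refine tendsto_of_tendsto_of_tendsto_of_le_of_le
    (tendsto_add_const_div ((tendsto_shift_div_iff (k + d)).2 hy) (-a d y))
    (tendsto_add_const_div hfy B) (fun n ↦ ?_) (fun n ↦ ?_)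
  · have hsub := ha d (n + k) y
    rw [show d + (n + k) = n + (k + d) by ring] at hsub
    exact div_le_div_of_nonneg_right (by linarith) n.cast_nonneg
  · have hsub := ha k n (f^[d] y)
    have hk : a k (f^[d] y) ≤ B := hB ⟨_, rfl⟩
    rw [← Function.iterate_add_apply, add_comm k n] at hsub
    exact div_le_div_of_nonneg_right (by linarith) n.cast_nonneg

end Growth

section Noetherian

variable {X : Type*} [TopologicalSpace X] [NoetherianSpace X] {f : X → X} {a : ℕ → X → ℝ}

lemma eventually_lt_mul_of_mem_orbitClosure (ha : IsSubadditiveCocycle f a) (hf : Continuous f)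
    (husc : ∀ n, UpperSemicontinuous (a n)) {N : ℕ} (hN : 0 < N) {y z : X}
    (hy : HasStableOrbitClosure f^[N] y) (hz : z ∈ orbitClosure f^[N] y) {t : ℝ}
    (ht : a N z / N < t) : ∀ᶠ n : ℕ in atTop, a n y < n * t := by
  have hN' : (0 : ℝ) < N := Nat.cast_pos.2 hN
  have hbdd n := bddAbove_range_of_upperSemicontinuous (husc n)
  obtain ⟨s, hs, hst⟩ := exists_between ht
  obtain ⟨r, hr, hrs⟩ := exists_between hs
  let bad : Closeds X := ⟨_, (husc N).isClosed_preimage (N * r)⟩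
  have hbad : ¬ orbitClosure f^[N] y ≤ bad := fun hle ↦
    (hle hz).not_gt ((div_lt_iff₀' hN').1 hr)
  have hdensity : HasZeroDensity {j | N * r ≤ a (N * 1) ((f^[N])^[j] y)} := by
    rw [mul_one]
    exact hy.hasZeroDensity (hf.iterate N) hbad
  refine ha.eventually_lt_mul_of_multiples hbdd hN hst ?_
  exact (ha.iterate N).eventually_lt_mul_of_hasZeroDensity (hbdd _)
    (mul_lt_mul_of_pos_left hrs hN') hdensity

theorem exists_tendsto_div_of_hasStableOrbitClosure (ha : IsSubadditiveCocycle f a)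
    (hf : Continuous f) (husc : ∀ n, UpperSemicontinuous (a n)) (hnonneg : ∀ n x, 0 ≤ a n x)
    {p : ℕ} (hp : 0 < p) {y : X} (hy : HasStableOrbitClosure f^[p] y) :
    ∃ c : ℝ, 0 ≤ c ∧ (∀ n > 0, ∀ z ∈ orbitClosure f^[p] y, n * (p * c) ≤ a (p * n) z) ∧
      ∀ q, Tendsto (fun n : ℕ ↦ a n ((f^[p])^[q] y) / n) atTop (𝓝 c) := by
  let rate (i : ℕ+ × orbitClosure f^[p] y) : ℝ := a (p * i.1) i.2 / (p * i.1 : ℕ)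
  have hrate i : 0 ≤ rate i := div_nonneg (hnonneg _ _) (Nat.cast_nonneg _)
  have : Nonempty (orbitClosure f^[p] y) := ⟨y, self_mem_orbitClosure _ y⟩
  have hlower : ∀ n > 0, ∀ z ∈ orbitClosure f^[p] y, n * (p * iInf rate) ≤ a (p * n) z := by
    intro n hn z hz
    have hle : iInf rate ≤ a (p * n) z / (p * n : ℕ) :=
      ciInf_le ⟨0, Set.forall_mem_range.2 hrate⟩ (⟨n, hn⟩, ⟨z, hz⟩)
    rw [le_div_iff₀' (Nat.cast_pos.2 (Nat.mul_pos hp hn)), Nat.cast_mul] at hle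
    linarith
  refine ⟨iInf rate, Real.iInf_nonneg hrate, hlower, fun q ↦ ?_⟩
  refine tendsto_div_of_eventually (fun t ht ↦ ?_) (fun t ht ↦ ?_)
  · refine ha.eventually_mul_lt_of_multiples
      (fun n ↦ bddAbove_range_of_upperSemicontinuous (husc n)) hp ht ?_
    filter_upwards [eventually_gt_atTop 0] with n hn
    exact hlower n hn _ (iterate_mem_orbitClosure _ y q)
  · obtain ⟨⟨M, z⟩, hz⟩ := exists_lt_of_ciInf_lt ht
    have hstable := hy.iterate q M.pos
    have hclosure := hy q M M.pos
    rw [← Function.iterate_mul] at hstable hclosure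
    exact ha.eventually_lt_mul_of_mem_orbitClosure hf husc (Nat.mul_pos hp M.pos) hstable
      (hclosure.ge z.2) hz

theorem exists_tendsto_div_iterate (ha : IsSubadditiveCocycle f a) (hf : Continuous f)
    (hf_closed : IsClosedMap f) (husc : ∀ n, UpperSemicontinuous (a n))
    (hnonneg : ∀ n x, 0 ≤ a n x) (x : X) :
    ∃ (c : ℝ) (L p : ℕ), 0 ≤ c ∧ 0 < p ∧
      (∀ l ≥ L, Tendsto (fun n : ℕ ↦ a n (f^[l] x) / n) atTop (𝓝 c)) ∧
      ∀ n > 0, ∃ u, f^[p * n] u = f^[L] x ∧ (p * n : ℕ) * c ≤ a (p * n) u := by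
  obtain ⟨s, p, hp, hstable⟩ := exists_hasStableOrbitClosure f x
  obtain ⟨c, hc, hlower, hlim⟩ :=
    ha.exists_tendsto_div_of_hasStableOrbitClosure hf husc hnonneg hp hstable
  refine ⟨c, s, p, hc, hp, fun l hl ↦ ?_, fun n hn ↦ ?_⟩
  · obtain ⟨d, rfl⟩ := Nat.exists_eq_add_of_le' hl
    rw [Function.iterate_add_apply]
    refine ha.tendsto_div_of_between (fun n ↦ bddAbove_range_of_upperSemicontinuous (husc n))
      (Nat.le_mul_of_pos_left d hp) (hlim 0) ?_
    simpa only [Function.iterate_mul] using hlim d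
  · have hsurj := (hstable.iterate 0 hn).surjOn
      (isClosedMap_iterate_s16 (isClosedMap_iterate_s16 hf_closed p) n)
    rw [hstable 0 n hn, ← Function.iterate_mul] at hsurj
    obtain ⟨u, hu, hfu⟩ := hsurj (self_mem_orbitClosure _ _)
    refine ⟨u, hfu, ?_⟩
    push_cast
    linarith [hlower n hn u hu]

end Noetherian

end IsSubadditiveCocycle

section Multiplicative

lemma isSubadditiveCocycle_log {X : Type*} {f : X → X} {κ : ℕ → X → ℝ} (hpos : ∀ n x, 0 < κ n x)
    (hκ : ∀ n m x, κ (n + m) x ≤ κ n x * κ m (f^[n] x)) :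
    IsSubadditiveCocycle f (fun n x ↦ Real.log (κ n x)) := by
  intro n m x
  rw [← Real.log_mul (hpos _ _).ne' (hpos _ _).ne']
  exact Real.log_le_log (hpos _ _) (hκ n m x)

lemma upperSemicontinuous_log {X : Type*} [TopologicalSpace X] {φ : X → ℝ} (hpos : ∀ x, 0 < φ x)
    (hφ : ∀ δ : ℝ, IsClosed {x | δ ≤ φ x}) : UpperSemicontinuous (fun x ↦ Real.log (φ x)) := by
  refine upperSemicontinuous_iff_isClosed_preimage.2 fun t ↦ ?_
  simpa only [Set.preimage, Set.mem_Ici, Real.le_log_iff_exp_le (hpos _)] using hφ (Real.exp t)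

lemma rpow_one_div_eq_exp_log_div {r : ℝ} (hr : 0 < r) (t : ℝ) :
    r ^ (1 / t) = Real.exp (Real.log r / t) := by
  rw [Real.rpow_def_of_pos hr, mul_one_div]

end Multiplicative

theorem stmt_16_general {X : Type*} [TopologicalSpace X] [NoetherianSpace X]
    (f : X → X) (hf_cont : Continuous f) (hf_closed : IsClosedMap f)
    (κ : ℕ → X → ℝ)
    (hκ1 : ∀ n x, 1 ≤ κ n x)
    (hκusc : ∀ n (δ : ℝ), IsClosed {x : X | δ ≤ κ n x})
    (hκsub : ∀ n m x, κ (n + m) x ≤ κ n x * κ m (f^[n] x))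
    (κneg : ℕ → X → ℝ)
    (hκneg : ∀ n x, IsGreatest (κ n '' (f^[n] ⁻¹' {x})) (κneg n x))
    (κm : X → ℝ)
    (hκm : ∀ x : X, Tendsto (fun n : ℕ ↦ κneg n x ^ (1 / (n : ℝ))) atTop (𝓝 (κm x)))
    (x : X) :
    ∃ (c : ℝ) (L : ℕ), 1 ≤ c ∧
      (∀ l : ℕ, L ≤ l → Tendsto (fun n : ℕ ↦ κ n (f^[l] x) ^ (1 / (n : ℝ))) atTop (𝓝 c)) ∧
      ∃ m : ℕ, c ≤ κm (f^[m] x) := by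
  have hpos n x : 0 < κ n x := one_pos.trans_le (hκ1 n x)
  obtain ⟨c, L, p, hc, hp, hlim, hpreimage⟩ :=
    (isSubadditiveCocycle_log hpos hκsub).exists_tendsto_div_iterate hf_cont hf_closed
      (fun n ↦ upperSemicontinuous_log (hpos n) (hκusc n)) (fun n x ↦ Real.log_nonneg (hκ1 n x)) x
  refine ⟨Real.exp c, L, Real.one_le_exp hc, fun l hl ↦ ?_, L, ?_⟩
  · simpa only [rpow_one_div_eq_exp_log_div (hpos _ _)] using (hlim l hl).rexp
  · have hmul : Tendsto (fun n ↦ p * n) atTop atTop := tendsto_id.const_mul_atTop' hp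
    refine ge_of_tendsto ((hκm (f^[L] x)).comp hmul) ?_
    filter_upwards [eventually_gt_atTop 0] with n hn
    obtain ⟨u, hfu, hu⟩ := hpreimage n hn
    have hpn : (0 : ℝ) < (p * n : ℕ) := Nat.cast_pos.2 (Nat.mul_pos hp hn)
    calc Real.exp c ≤ κ (p * n) u ^ (1 / ((p * n : ℕ) : ℝ)) := by
          rw [rpow_one_div_eq_exp_log_div (hpos _ _)]
          exact Real.exp_le_exp.2 ((le_div_iff₀' hpn).2 hu)
      _ ≤ κneg (p * n) (f^[L] x) ^ (1 / ((p * n : ℕ) : ℝ)) :=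
          Real.rpow_le_rpow (hpos _ _).le ((hκneg _ _).2 ⟨u, hfu, rfl⟩) (by positivity)

/-- For every `x`, for all large enough `l` the sequence `[κ_n(f^[l](x))]^{1/n}`
converges to a constant `c ≥ 1` independent of `l`; moreover some iterate of `f`
sends `x` into the invariant set `{κ₋ ≥ c}`. -/
theorem stmt_16 {X : Type*} [TopologicalSpace X] [Nonempty X]
    [TopologicalSpace.NoetherianSpace X] [IrreducibleSpace X]
    (f : X → X) (hf_cont : Continuous f) (hf_open : IsOpenMap f)
    (hf_closed : IsClosedMap f) (hf_surj : Function.Surjective f)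
    (κ : ℕ → X → ℝ)
    (hκ1 : ∀ n x, 1 ≤ κ n x)
    (hκmin : ∀ n, ∃ x, κ n x = 1)
    (hκusc : ∀ n (δ : ℝ), IsClosed {x : X | δ ≤ κ n x})
    (hκsub : ∀ n m x, κ (n + m) x ≤ κ n x * κ m (f^[n] x))
    (κneg : ℕ → X → ℝ)
    (hκneg : ∀ n x, IsGreatest (κ n '' (f^[n] ⁻¹' {x})) (κneg n x))
    (hBaire : ∀ Y : Set X, Y.Nonempty → IsClosed Y → IsIrreducible Y →
      ∀ Z : ℕ → Set X, (∀ i, IsClosed (Z i) ∧ Z i ⊂ Y) → Y ≠ ⋃ i, Z i)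
    (k : ℕ) (hdimX : topologicalKrullDim X = (k : ℕ∞))
    (κm : X → ℝ)
    (hκm : ∀ x : X,
      Tendsto (fun n : ℕ => (κneg n x) ^ (1 / (n : ℝ))) atTop (nhds (κm x))) :
    ∀ x : X, ∃ (c : ℝ) (L : ℕ), 1 ≤ c ∧
      (∀ l : ℕ, L ≤ l →
        Tendsto (fun n : ℕ => (κ n (f^[l] x)) ^ (1 / (n : ℝ))) atTop (nhds c)) ∧
      ∃ m : ℕ, c ≤ κm (f^[m] x) := by
  exact stmt_16_general f hf_cont hf_closed κ hκ1 hκusc hκsub κneg hκneg κm hκm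
end
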